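/- arXiv:1006.4402 — 10 statements merged into one kernel-verified Lean document; each statement's English description precedes it below -/
import Mathlib

section
/- Let H_A and H_B be finite-dimensional complex Hilbert spaces, let {P^i}_{i∈I} and {Q^j}_{j∈J} be two CSOOPs on H_B, and let ρ be a density operator on H_A ⊗ H_B satisfying ρ = Σ_i (I_A ⊗ P^i) ρ (I_A ⊗ P^i). Then ρ = Σ_j (I_A ⊗ Q^j) ρ (I_A ⊗ Q^j) if and only if tr_B(ρ (I_A ⊗ P^i)) = tr_B(ρ (I_A ⊗ Q^j)) for every pair (i, j) with P^i Q^j ≠ 0. -/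
/-!
If `P` is an idempotent of trace one, then `P` has rank one, so compressing `ρ` by `1 ⊗ P`
gives `ptraceB (ρ (1 ⊗ P)) ⊗ P`. Writing `α i` and `β j` for these partial traces against `P i`
and `Q j`, the hypothesis reads `ρ = ∑ i, α i ⊗ P i`, and invariance under the second dephasing
reads `ρ = ∑ j, β j ⊗ Q j`.

If both hold, multiplying by `1 ⊗ P i` on the left and `1 ⊗ Q j` on the right gives
`α i ⊗ P i Q j = β j ⊗ P i Q j`, so `α i = β j` whenever `P i Q j ≠ 0`. Conversely, since both
families sum to the identity,
`∑ i, α i ⊗ P i = ∑ i, ∑ j, α i ⊗ P i Q j = ∑ i, ∑ j, β j ⊗ P i Q j = ∑ j, β j ⊗ Q j`.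
-/

open scoped Kronecker ComplexOrder

noncomputable section

/-- A complete set of orthogonal one-dimensional projectors (CSOOP): a family of
Hermitian rank-one projectors that are mutually orthogonal and sum to the identity. -/
def IsCSOOP {ι H : Type*} [Fintype ι] [Fintype H] [DecidableEq H]
    (P : ι → Matrix H H ℂ) : Prop :=
  (∀ i, (P i).IsHermitian) ∧ (∀ i, P i * P i = P i) ∧ (∀ i, (P i).trace = 1) ∧
    (∀ i j, i ≠ j → P i * P j = 0) ∧ ∑ i, P i = 1

/-- A density operator: positive semidefinite with trace 1. -/
def IsDensity {H : Type*} [Fintype H] [DecidableEq H] (ρ : Matrix H H ℂ) : Prop :=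
  ρ.PosSemidef ∧ ρ.trace = 1

/-- Partial trace over the second tensor factor. -/
def ptraceB {A B : Type*} [Fintype B]
    (X : Matrix (A × B) (A × B) ℂ) : Matrix A A ℂ :=
  Matrix.of fun a a' => ∑ b, X (a, b) (a', b)

/-- An idempotent of trace one has rank one: all its `2 × 2` minors vanish. -/
lemma minor_of_idem_trace_one {B : Type*} [Fintype B] [DecidableEq B] {P : Matrix B B ℂ}
    (h : P * P = P) (ht : P.trace = 1) (a b c d : B) :
    P a b * P c d = P a d * P c b := by
  obtain ⟨e, he⟩ : ∃ e, P e e ≠ 0 := by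
    by_contra! h0
    simp [Matrix.trace, h0] at ht
  -- `R` is a rank-one idempotent below `P`, so `P - R` is an idempotent of trace zero.
  set R : Matrix B B ℂ := (P e e)⁻¹ • Matrix.vecMulVec (P.col e) (P.row e) with hR
  have hc : P.mulVec (P.col e) = P.col e := by
    ext x
    exact congrFun (congrFun h x) e
  have hr : Matrix.vecMul (P.row e) P = P.row e := by
    ext x
    exact congrFun (congrFun h e) x
  have hrc : P.row e ⬝ᵥ P.col e = P e e := congrFun (congrFun h e) e
  have hPR : P * R = R := by
    rw [hR, Matrix.mul_smul, Matrix.mul_vecMulVec, hc]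
  have hRP : R * P = R := by
    rw [hR, Matrix.smul_mul, Matrix.vecMulVec_mul, hr]
  have hRR : R * R = R := by
    conv_lhs => rw [hR]
    rw [Matrix.smul_mul, Matrix.vecMulVec_mul, hR, Matrix.vecMul_smul, Matrix.vecMul_vecMulVec,
      hrc, smul_smul, inv_mul_cancel₀ he, one_smul]
  have htR : R.trace = 1 := by
    rw [hR, Matrix.trace_smul, Matrix.trace_vecMulVec, dotProduct_comm, hrc, smul_eq_mul,
      inv_mul_cancel₀ he]
  have hidem : IsIdempotentElem (Matrix.toLin' (P - R)) := by
    rw [IsIdempotentElem, Module.End.mul_eq_comp, ← Matrix.toLin'_mul, sub_mul, mul_sub, mul_sub,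
      h, hPR, hRP, hRR, sub_self, sub_zero]
  have hz : Matrix.toLin' (P - R) = 0 := by
    apply LinearMap.IsIdempotentElem.eq_zero_of_trace_eq_zero hidem
    rw [Matrix.trace_toLin'_eq, Matrix.trace_sub, ht, htR, sub_self]
  have hP : P = R := sub_eq_zero.mp ((LinearEquiv.map_eq_zero_iff _).mp hz)
  have hent : ∀ x y, P x y = (P e e)⁻¹ * (P x e * P e y) := fun x y =>
    congrFun (congrFun hP x) y
  rw [hent a b, hent c d, hent a d, hent c b]
  ring

/-- Compression by `1 ⊗ P`, with `P` an idempotent of trace one, leaves a product operator. -/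
lemma compress_eq {A B : Type*} [Fintype A] [DecidableEq A] [Fintype B] [DecidableEq B]
    {P : Matrix B B ℂ} (h : P * P = P) (ht : P.trace = 1)
    (ρ : Matrix (A × B) (A × B) ℂ) :
    ((1 : Matrix A A ℂ) ⊗ₖ P) * ρ * ((1 : Matrix A A ℂ) ⊗ₖ P) =
      ptraceB (ρ * ((1 : Matrix A A ℂ) ⊗ₖ P)) ⊗ₖ P := by
  ext ⟨a, b⟩ ⟨a', b'⟩
  simp only [Matrix.mul_apply, Fintype.sum_prod_type, Matrix.kroneckerMap_apply, Matrix.one_apply,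
    ptraceB, Matrix.of_apply, ite_mul, mul_ite, one_mul, zero_mul, mul_zero,
    Finset.sum_ite_irrel, Finset.sum_const_zero, Finset.sum_ite_eq, Finset.sum_ite_eq',
    Finset.mem_univ, if_true, Finset.sum_mul]
  rw [Finset.sum_comm]
  refine Finset.sum_congr rfl fun x _ => Finset.sum_congr rfl fun y _ => ?_
  linear_combination ρ (a, x) (a', y) * minor_of_idem_trace_one h ht b x y b'

lemma sum_kron {A B ι : Type*} [Fintype ι] (X : Matrix A A ℂ) (Y : ι → Matrix B B ℂ) :
    X ⊗ₖ (∑ i, Y i) = ∑ i, X ⊗ₖ Y i := by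
  ext ⟨a, b⟩ ⟨a', b'⟩
  simp [Matrix.sum_apply, Finset.mul_sum]

/-- The left factor of a product operator is determined by the product and a nonzero right
factor. -/
lemma kron_right_cancel {A B : Type*} {X Y : Matrix A A ℂ} {Z : Matrix B B ℂ} (hZ : Z ≠ 0)
    (h : X ⊗ₖ Z = Y ⊗ₖ Z) : X = Y := by
  obtain ⟨b, b', hb⟩ : ∃ b b', Z b b' ≠ 0 := by
    by_contra! h0
    exact hZ (Matrix.ext h0)
  ext a a'
  exact mul_right_cancel₀ hb (congrFun (congrFun h (a, b)) (a', b'))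

theorem stmt_0 {A B ι κ : Type*} [Fintype A] [DecidableEq A] [Fintype B] [DecidableEq B]
    [Fintype ι] [Fintype κ]
    (P : ι → Matrix B B ℂ) (Q : κ → Matrix B B ℂ)
    (hP : IsCSOOP P) (hQ : IsCSOOP Q)
    (ρ : Matrix (A × B) (A × B) ℂ) (hρ : IsDensity ρ)
    (hdiag : ρ = ∑ i, ((1 : Matrix A A ℂ) ⊗ₖ P i) * ρ * ((1 : Matrix A A ℂ) ⊗ₖ P i)) :
    (ρ = ∑ j, ((1 : Matrix A A ℂ) ⊗ₖ Q j) * ρ * ((1 : Matrix A A ℂ) ⊗ₖ Q j)) ↔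
      ∀ i j, P i * Q j ≠ 0 →
        ptraceB (ρ * ((1 : Matrix A A ℂ) ⊗ₖ P i)) =
          ptraceB (ρ * ((1 : Matrix A A ℂ) ⊗ₖ Q j)) := by
  have hPc := fun i => compress_eq (A := A) (hP.2.1 i) (hP.2.2.1 i) ρ
  have hQc := fun j => compress_eq (A := A) (hQ.2.1 j) (hQ.2.2.1 j) ρ
  simp only [hPc] at hdiag
  simp only [hQc]
  clear hPc hQc
  generalize hα : (fun i => ptraceB (ρ * ((1 : Matrix A A ℂ) ⊗ₖ P i))) = α at *
  generalize hβ : (fun j => ptraceB (ρ * ((1 : Matrix A A ℂ) ⊗ₖ Q j))) = β at *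
  have hα' : ∀ i, ptraceB (ρ * ((1 : Matrix A A ℂ) ⊗ₖ P i)) = α i := congrFun hα
  have hβ' : ∀ j, ptraceB (ρ * ((1 : Matrix A A ℂ) ⊗ₖ Q j)) = β j := congrFun hβ
  simp only [hα'] at hdiag
  simp only [hα', hβ']
  clear hα hβ hα' hβ'
  constructor
  · intro h i j hij
    apply kron_right_cancel hij
    have h1 : ((1 : Matrix A A ℂ) ⊗ₖ P i) * ρ * ((1 : Matrix A A ℂ) ⊗ₖ Q j)
        = α i ⊗ₖ (P i * Q j) := by
      rw [hdiag, Finset.mul_sum, Finset.sum_eq_single i]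
      · simp only [← Matrix.mul_kronecker_mul, one_mul, mul_one, hP.2.1 i]
      · intro k _ hk
        rw [← Matrix.mul_kronecker_mul, hP.2.2.2.1 i k hk.symm, Matrix.kronecker_zero]
      · simp
    have h2 : ((1 : Matrix A A ℂ) ⊗ₖ P i) * ρ * ((1 : Matrix A A ℂ) ⊗ₖ Q j)
        = β j ⊗ₖ (P i * Q j) := by
      rw [h, mul_assoc, Finset.sum_mul, Finset.sum_eq_single j]
      · simp only [← Matrix.mul_kronecker_mul, one_mul, mul_one, hQ.2.1 j]
      · intro k _ hk
        rw [← Matrix.mul_kronecker_mul, hQ.2.2.2.1 k j hk, Matrix.kronecker_zero]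
      · simp
    rw [← h1, h2]
  · intro h
    have h1 : ∀ i, α i ⊗ₖ P i = ∑ j, α i ⊗ₖ (P i * Q j) := fun i => by
      rw [← sum_kron, ← Finset.mul_sum, hQ.2.2.2.2, mul_one]
    have h2 : ∀ j, β j ⊗ₖ Q j = ∑ i, β j ⊗ₖ (P i * Q j) := fun j => by
      rw [← sum_kron, ← Finset.sum_mul, hP.2.2.2.2, one_mul]
    rw [hdiag]
    simp only [h1, h2]
    rw [Finset.sum_comm]
    refine Finset.sum_congr rfl fun j _ => Finset.sum_congr rfl fun i _ => ?_
    by_cases hij : P i * Q j = 0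
    · rw [hij, Matrix.kronecker_zero, Matrix.kronecker_zero]
    · rw [h i j hij]
end
end

section
/- Let H_A and H_B be finite-dimensional complex Hilbert spaces, let {P^i}_{i∈I} be a CSOOP on H_B, and let ρ be a density operator on H_A ⊗ H_B. Then ρ = Σ_i (I_A ⊗ P^i) ρ (I_A ⊗ P^i) if and only if ρ = Σ_i tr_B(ρ (I_A ⊗ P^i)) ⊗ P^i. -/
/-!
The two sums agree term by term, so the two conditions on `ρ` coincide. An idempotent `P` of trace one has one-dimensional range
(`trace = finrank (range P)`), hence is an outer product `v wᵀ`; this is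
`exists_eq_vecMulVec`. For such a `P` and any block `M` on the second factor,
`P M P = v (wᵀ M v) wᵀ = tr(M P) P`. Applying this to each block of an operator `X` on the
tensor product gives `(1 ⊗ P) X (1 ⊗ P) = tr_B(X (1 ⊗ P)) ⊗ P`, which is
`kronecker_sandwich`.
-/

open scoped Kronecker ComplexOrder

noncomputable section

/-- Partial trace over the first tensor factor. -/
def ptraceA {A B : Type*} [Fintype A]
    (X : Matrix (A × B) (A × B) ℂ) : Matrix B B ℂ :=
  Matrix.of fun b b' => ∑ a, X (a, b) (a, b')

/-- Over `ℂ`, an idempotent matrix of trace one is an outer product, because the trace of an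
idempotent is the dimension of its range. -/
lemma exists_eq_vecMulVec {B : Type*} [Fintype B] [DecidableEq B] {P : Matrix B B ℂ}
    (hidem : P * P = P) (htr : P.trace = 1) :
    ∃ v w : B → ℂ, P = Matrix.vecMulVec v w := by
  have he : IsIdempotentElem (Matrix.toLin' P) := by
    rw [IsIdempotentElem, Module.End.mul_eq_comp, ← Matrix.toLin'_mul, hidem]
  have h1 := (LinearMap.IsIdempotentElem.isProj_range _ he).trace
  rw [Matrix.trace_toLin'_eq, htr] at h1
  have h2 : Module.finrank ℂ (LinearMap.range (Matrix.toLin' P)) = 1 := by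
    exact_mod_cast h1.symm
  obtain ⟨v, -, hv⟩ := finrank_eq_one_iff'.1 h2
  -- The `j`-th column of `P` is a multiple `w j` of the vector spanning the range.
  choose w hw using fun j : B =>
    hv ⟨Matrix.toLin' P (Pi.single j 1), LinearMap.mem_range_self _ _⟩
  refine ⟨v, w, ?_⟩
  ext i j
  have h := congrFun (congrArg Subtype.val (hw j)) i
  simp only [SetLike.val_smul, Pi.smul_apply, smul_eq_mul, Matrix.toLin'_apply,
    Matrix.mulVec_single_one, Matrix.col_apply] at h
  rw [Matrix.vecMulVec_apply, ← h, mul_comm]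

/-- Compressing by a rank-one projection on the second factor factorises: this is the identity
`P M P = tr(M P) P` applied to every `B`-block of `X`. -/
lemma kronecker_sandwich {A B : Type*} [Fintype A] [DecidableEq A] [Fintype B] [DecidableEq B]
    {P : Matrix B B ℂ} (hidem : P * P = P) (htr : P.trace = 1)
    (X : Matrix (A × B) (A × B) ℂ) :
    ((1 : Matrix A A ℂ) ⊗ₖ P) * X * ((1 : Matrix A A ℂ) ⊗ₖ P) =
      ptraceB (X * ((1 : Matrix A A ℂ) ⊗ₖ P)) ⊗ₖ P := by
  obtain ⟨v, w, rfl⟩ := exists_eq_vecMulVec hidem htr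
  ext ⟨a, b⟩ ⟨a', b'⟩
  simp only [ptraceB, Matrix.mul_apply, Matrix.kroneckerMap_apply, Fintype.sum_prod_type,
    Matrix.one_apply, Matrix.vecMulVec_apply, Matrix.of_apply, ite_mul, mul_ite, one_mul,
    zero_mul, mul_zero, Finset.sum_ite_irrel, Finset.sum_const_zero, Finset.sum_ite_eq,
    Finset.sum_ite_eq', Finset.mem_univ, if_true, Finset.sum_mul]
  rw [Finset.sum_comm]
  refine Finset.sum_congr rfl fun c _ => Finset.sum_congr rfl fun d _ => ?_
  ring

theorem stmt_1 {A B ι : Type*} [Fintype A] [DecidableEq A] [Fintype B] [DecidableEq B]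
    [Fintype ι]
    (P : ι → Matrix B B ℂ) (hP : IsCSOOP P)
    (ρ : Matrix (A × B) (A × B) ℂ) (hρ : IsDensity ρ) :
    (ρ = ∑ i, ((1 : Matrix A A ℂ) ⊗ₖ P i) * ρ * ((1 : Matrix A A ℂ) ⊗ₖ P i)) ↔
      ρ = ∑ i, ptraceB (ρ * ((1 : Matrix A A ℂ) ⊗ₖ P i)) ⊗ₖ P i := by
  obtain ⟨-, hidem, htr, -, -⟩ := hP
  simp only [fun i => kronecker_sandwich (hidem i) (htr i) ρ]
end
end

section
/- Let H = H_1 ⊗ ⋯ ⊗ H_n be a tensor product of finite-dimensional complex Hilbert spaces and let ρ be a density operator on H. Suppose that for every subsystem k there is a CSOOP {P^i_k}_{i} on H_k such that ρ = Σ_i (I ⊗ P^i_k ⊗ I) ρ (I ⊗ P^i_k ⊗ I), where the projector acts on the k-th factor. Then ρ = Σ_{i⃗} p_{i⃗} ⊗_{k=1}^n P^{i_k}_k, where i⃗ = (i_1, …, i_n) ranges over all index vectors and p_{i⃗} = tr(ρ ⊗_k P^{i_k}_k); in particular ρ is diagonal in a product basis. -/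
/-!
A density operator fixed by the dephasing map `ρ ↦ ∑ i, Sᵢ ρ Sᵢ` of a site commutes with every
local projector `Sᵢ` of that site (`commute_of_dephased`). Each product projector
`Q = ⨂ₖ P k (iv k)` is a product of local ones, so it commutes with `ρ` as well
(`commute_prodOp`). These `Q` sum to the identity, so `ρ = ∑ Q ρ = ∑ Q ρ Q`, and since each
`Q` has rank one, `Q ρ Q = tr(ρ Q) Q` (`vecMulVec_sandwich`). The factorization of `Q` as
`v wᵀ` comes from the same factorization of every `P k i`, which is an idempotent whose trace,
hence rank, is one (`exists_vecMulVec`).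
-/

open scoped Kronecker ComplexOrder Classical

noncomputable section

/-- The tensor (Kronecker) product of one operator per tensor factor, as an
operator on the full tensor product space `⨂ₖ H k` (indexed by `∀ k, H k`). -/
def prodOp {n : ℕ} {H : Fin n → Type*} [∀ k, Fintype (H k)]
    (M : ∀ k, Matrix (H k) (H k) ℂ) : Matrix (∀ k, H k) (∀ k, H k) ℂ :=
  Matrix.of fun x y => ∏ k, M k (x k) (y k)

/-- The operator `I ⊗ ⋯ ⊗ M ⊗ ⋯ ⊗ I` acting as `M` on the `k`-th factor. -/
def siteOp {n : ℕ} {H : Fin n → Type*} [∀ k, Fintype (H k)] [∀ k, DecidableEq (H k)]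
    (k : Fin n) (M : Matrix (H k) (H k) ℂ) : Matrix (∀ k, H k) (∀ k, H k) ℂ :=
  prodOp (Function.update (fun l => (1 : Matrix (H l) (H l) ℂ)) k M)

section Helpers

variable {n : ℕ} {H : Fin n → Type*} [∀ k, Fintype (H k)]

lemma prodOp_mul (A B : ∀ k, Matrix (H k) (H k) ℂ) :
    prodOp A * prodOp B = prodOp fun k => A k * B k := by
  ext x y
  simp only [prodOp, Matrix.mul_apply, Matrix.of_apply, ← Finset.prod_mul_distrib]
  rw [Finset.prod_univ_sum, Fintype.piFinset_univ]

lemma sum_prodOp {ι : Fin n → Type*} [∀ k, Fintype (ι k)]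
    (P : ∀ k, ι k → Matrix (H k) (H k) ℂ) :
    ∑ iv : ∀ k, ι k, prodOp (fun k => P k (iv k)) = prodOp fun k => ∑ i, P k i := by
  ext x y
  simp only [prodOp, Matrix.sum_apply, Matrix.of_apply]
  rw [Finset.prod_univ_sum, Fintype.piFinset_univ]

lemma prodOp_vecMulVec (v w : ∀ k, H k → ℂ) :
    prodOp (fun k => Matrix.vecMulVec (v k) (w k)) =
      Matrix.vecMulVec (fun x => ∏ k, v k (x k)) (fun x => ∏ k, w k (x k)) := by
  ext x y
  simp [prodOp, Matrix.vecMulVec_apply, Finset.prod_mul_distrib]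

variable [∀ k, DecidableEq (H k)]

lemma prodOp_one : prodOp (fun k => (1 : Matrix (H k) (H k) ℂ)) = 1 := by
  ext x y
  simp only [prodOp, Matrix.of_apply, Matrix.one_apply]
  by_cases h : x = y
  · subst h; simp
  · obtain ⟨k, hk⟩ := Function.ne_iff.1 h
    rw [if_neg h]
    exact Finset.prod_eq_zero (Finset.mem_univ k) (if_neg hk)

lemma siteOp_mul (k : Fin n) (A B : Matrix (H k) (H k) ℂ) :
    siteOp k A * siteOp k B = siteOp k (A * B) := by
  rw [siteOp, siteOp, siteOp, prodOp_mul]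
  congr 1
  ext1 l
  by_cases h : l = k
  · subst h; simp
  · simp [h]

lemma siteOp_zero (k : Fin n) : siteOp k (0 : Matrix (H k) (H k) ℂ) = 0 := by
  ext x y
  exact Finset.prod_eq_zero (Finset.mem_univ k) (by simp)

/-- Multiplying `ρ = ∑ j, S j * ρ * S j` by `S i` on either side leaves only `S i * ρ * S i`. -/
lemma commute_of_dephased {κ R : Type*} [Fintype κ] [Ring R] (S : κ → R) (ρ : R)
    (hidem : ∀ i, S i * S i = S i) (horth : ∀ i j, i ≠ j → S i * S j = 0)
    (hρ : ρ = ∑ i, S i * ρ * S i) (i : κ) : Commute (S i) ρ := by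
  have h₁ : S i * ρ = S i * ρ * S i := by
    conv_lhs => rw [hρ]
    rw [Finset.mul_sum, Finset.sum_eq_single i]
    · rw [← mul_assoc, ← mul_assoc, hidem]
    · intro j _ hj
      rw [← mul_assoc, ← mul_assoc, horth i j hj.symm, zero_mul, zero_mul]
    · simp
  have h₂ : ρ * S i = S i * ρ * S i := by
    conv_lhs => rw [hρ]
    rw [Finset.sum_mul, Finset.sum_eq_single i]
    · rw [mul_assoc, hidem]
    · intro j _ hj
      rw [mul_assoc, horth j i hj, mul_zero]
    · simp
  exact h₁.trans h₂.symm

/-- An operator commuting with each local operator commutes with their tensor product, because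
the tensor product is built up by multiplying in one site at a time. -/
lemma commute_prodOp (ρ : Matrix (∀ k, H k) (∀ k, H k) ℂ) (A : ∀ k, Matrix (H k) (H k) ℂ)
    (h : ∀ k, Commute (siteOp k (A k)) ρ) : Commute (prodOp A) ρ := by
  have key : ∀ s : Finset (Fin n),
      Commute (prodOp fun k => if k ∈ s then A k else 1) ρ := by
    intro s
    induction s using Finset.induction_on with
    | empty =>
      simp only [Finset.notMem_empty, if_false]
      rw [prodOp_one]
      exact Commute.one_left _
    | insert a s ha ih =>
      have e : (prodOp fun k => if k ∈ insert a s then A k else 1) =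
          siteOp a (A a) * prodOp fun k => if k ∈ s then A k else 1 := by
        rw [siteOp, prodOp_mul]
        congr 1
        ext1 l
        by_cases hl : l = a
        · subst hl; simp [ha]
        · simp [hl]
      rw [e]
      exact (h a).mul_left ih
  simpa using key Finset.univ

/-- An idempotent of trace one factors as a column times a row: for an idempotent the trace
is the dimension of the range. -/
lemma exists_vecMulVec {m : Type*} [Fintype m] [DecidableEq m] (Q : Matrix m m ℂ)
    (hQ : Q * Q = Q) (ht : Q.trace = 1) : ∃ v w : m → ℂ, Q = Matrix.vecMulVec v w := by
  have hid : IsIdempotentElem (Matrix.toLin' Q) := by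
    rw [IsIdempotentElem, Module.End.mul_eq_comp, ← Matrix.toLin'_mul, hQ]
  have hfin := (LinearMap.IsIdempotentElem.isProj_range _ hid).trace
  rw [Matrix.trace_toLin'_eq, ht] at hfin
  have h1 : Module.finrank ℂ (LinearMap.range (Matrix.toLin' Q)) = 1 := by
    exact_mod_cast hfin.symm
  obtain ⟨v, -, hv⟩ := finrank_eq_one_iff'.1 h1
  -- The `j`-th column of `Q` is `Q *ᵥ Pi.single j 1`, so it is a multiple of `v`.
  choose w hw using fun j : m =>
    hv ⟨Matrix.toLin' Q (Pi.single j 1), LinearMap.mem_range_self _ _⟩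
  refine ⟨v.1, w, ?_⟩
  ext i j
  have := congrFun (congrArg Subtype.val (hw j)) i
  simp at this
  rw [Matrix.vecMulVec_apply, ← this, mul_comm]

lemma vecMulVec_sandwich {m : Type*} [Fintype m] (ρ : Matrix m m ℂ) (v w : m → ℂ) :
    Matrix.vecMulVec v w * ρ * Matrix.vecMulVec v w =
      (ρ * Matrix.vecMulVec v w).trace • Matrix.vecMulVec v w := by
  rw [mul_assoc, Matrix.mul_vecMulVec, Matrix.vecMulVec_mul_vecMulVec, Matrix.trace_vecMulVec,
    dotProduct_comm]
  ext i j
  simp [Matrix.vecMulVec_apply]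
  ring

end Helpers

theorem stmt_3 {n : ℕ} {H : Fin n → Type*} [∀ k, Fintype (H k)] [∀ k, DecidableEq (H k)]
    {ι : Fin n → Type*} [∀ k, Fintype (ι k)]
    (ρ : Matrix (∀ k, H k) (∀ k, H k) ℂ) (hρ : IsDensity ρ)
    (P : ∀ k, ι k → Matrix (H k) (H k) ℂ) (hP : ∀ k, IsCSOOP (P k))
    (hcomm : ∀ k, ρ = ∑ i, siteOp k (P k i) * ρ * siteOp k (P k i)) :
    ρ = ∑ iv : ∀ k, ι k,
      (ρ * prodOp fun k => P k (iv k)).trace • prodOp fun k => P k (iv k) := by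
  have hQcomm : ∀ iv : ∀ k, ι k, Commute (prodOp fun k => P k (iv k)) ρ := fun iv =>
    commute_prodOp ρ _ fun k =>
      commute_of_dephased (fun i => siteOp k (P k i)) ρ
        (fun i => by rw [siteOp_mul, (hP k).2.1 i])
        (fun i j hij => by rw [siteOp_mul, (hP k).2.2.2.1 i j hij, siteOp_zero])
        (hcomm k) (iv k)
  have hterm : ∀ iv : ∀ k, ι k, (prodOp fun k => P k (iv k)) * ρ =
      (ρ * prodOp fun k => P k (iv k)).trace • prodOp fun k => P k (iv k) := by
    intro iv
    have hQ : (prodOp fun k => P k (iv k)) * (prodOp fun k => P k (iv k)) =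
        prodOp fun k => P k (iv k) := by
      rw [prodOp_mul]
      simp only [fun k => (hP k).2.1 (iv k)]
    choose v w hvw using fun k =>
      exists_vecMulVec (P k (iv k)) ((hP k).2.1 (iv k)) ((hP k).2.2.1 (iv k))
    have hrank := prodOp_vecMulVec v w
    simp only [← hvw] at hrank
    have hs := vecMulVec_sandwich ρ (fun x => ∏ k, v k (x k)) (fun x => ∏ k, w k (x k))
    rw [← hrank] at hs
    rw [← hs, mul_assoc, ← (hQcomm iv).eq, ← mul_assoc, hQ]
  have hsum : ∑ iv : ∀ k, ι k, prodOp (fun k => P k (iv k)) = 1 := by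
    rw [sum_prodOp]
    simp only [fun k => (hP k).2.2.2.2]
    exact prodOp_one
  calc ρ = (∑ iv : ∀ k, ι k, prodOp fun k => P k (iv k)) * ρ := by rw [hsum, one_mul]
    _ = _ := by rw [Finset.sum_mul]; exact Finset.sum_congr rfl fun iv _ => hterm iv
end
end

section
/- Let H_𝒢 and H_𝒢̄ be finite-dimensional complex Hilbert spaces, let {P^a_𝒢}_a be a CSOOP on H_𝒢 and {P^b_𝒢̄}_b a CSOOP on H_𝒢̄, and let ρ = Σ_{a,b} p_{ab} P^a_𝒢 ⊗ P^b_𝒢̄ be a density operator. Let G = G_𝒢 ⊗ I be unitary with G_𝒢 unitary on H_𝒢, and set σ = G ρ G†. Then a CSOOP {Q^j}_j on H_𝒢 satisfies σ = Σ_j (Q^j ⊗ I) σ (Q^j ⊗ I) if and only if tr_𝒢(ρ (P^h_𝒢 ⊗ I)) = tr_𝒢(ρ (P^a_𝒢 ⊗ I)) for all indices h, a, j such that (G_𝒢 P^h_𝒢 G_𝒢†) Q^j ≠ 0 and (G_𝒢 P^a_𝒢 G_𝒢†) Q^j ≠ 0. -/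
/-!
Write `R a = G₁ * PG a * G₁ᴴ` and `T a = ∑ b, p a b • PB b`. Then `σ = ∑ a, R a ⊗ₖ T a`, and
since every `PG a` has trace one, `ptraceA (ρ * (PG a ⊗ₖ 1)) = T a`.

Invariance of `σ` under the pinching by `Q` means that `σ` commutes with every `Q j ⊗ₖ 1`
(`pinching_fixed_iff`). Compressing that commutator by `R h` on the left and `R a` on the right
gives `(R h * Q j * R a) ⊗ₖ (T a - T h)`, so commutation amounts to: for all `h`, `a`, `j`, either
`R h * Q j * R a = 0` or `T a = T h` (`commute_kronecker_iff`). Since `Q j` has rank one,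
`R h * Q j * R a` vanishes only if `R h * Q j = 0` or `Q j * R a = 0` (`mul_rankOne_mul_eq_zero`),
and the second is the adjoint of `R a * Q j = 0`.
-/


open Matrix
open scoped Kronecker ComplexOrder Classical

noncomputable section

/-- A Hermitian idempotent of trace one is the projector onto a line. If `w` is a nonzero column
of `Q` and `E` is `Q` minus the projector onto `w`, then `E` is a Hermitian idempotent of trace
zero, hence zero. -/
lemma exists_eq_vecMulVec_s8 {H : Type*} [Fintype H] [DecidableEq H] {Q : Matrix H H ℂ}
    (h₁ : Q.IsHermitian) (h₂ : Q * Q = Q) (h₃ : Q.trace = 1) :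
    ∃ (c : ℂ) (w : H → ℂ), Q = c • vecMulVec w (star w) := by
  have hne : Q ≠ 0 := by
    rintro rfl
    simp at h₃
  obtain ⟨k, hk⟩ : ∃ k, Q.col k ≠ 0 := by
    by_contra! hcon
    exact hne (by ext i j; exact congrFun (hcon j) i)
  set w := Q.col k with hw
  have hQw : Q *ᵥ w = w := by
    ext i
    exact congrFun (congrFun h₂ i) k
  have hwQ : star w ᵥ* Q = star w := by
    have := congrArg star hQw
    rwa [star_mulVec, h₁.eq] at this
  have hn : star w ⬝ᵥ w ≠ 0 := by simpa using hk
  have hstar : star (star w ⬝ᵥ w) = star w ⬝ᵥ w := by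
    rw [← star_dotProduct_star, star_star, dotProduct_comm]
  set n := star w ⬝ᵥ w with hndef
  refine ⟨n⁻¹, w, ?_⟩
  set V := vecMulVec w (star w) with hV
  have hVH : Vᴴ = V := by rw [hV, conjTranspose_vecMulVec, star_star]
  have hQV : Q * V = V := by rw [hV, mul_vecMulVec, hQw]
  have hVQ : V * Q = V := by rw [hV, vecMulVec_mul, hwQ]
  have hVV : V * V = n • V := by
    rw [hV, vecMulVec_mul_vecMulVec, ← hndef, vecMulVec_smul]
  have hEH : (Q - n⁻¹ • V)ᴴ = Q - n⁻¹ • V := by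
    rw [conjTranspose_sub, h₁.eq, conjTranspose_smul, hVH, star_inv₀, hstar]
  have hEE : (Q - n⁻¹ • V) * (Q - n⁻¹ • V) = Q - n⁻¹ • V := by
    simp only [sub_mul, mul_sub, h₂, smul_mul_assoc, mul_smul_comm, hQV, hVQ, hVV,
      smul_smul, inv_mul_cancel₀ hn, one_smul, sub_self, smul_zero, sub_zero]
  have htr : (Q - n⁻¹ • V).trace = 0 := by
    rw [trace_sub, h₃, trace_smul, hV, trace_vecMulVec, dotProduct_comm, ← hndef, smul_eq_mul,
      inv_mul_cancel₀ hn, sub_self]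
  have hE : Q - n⁻¹ • V = 0 := by
    rw [← trace_conjTranspose_mul_self_eq_zero_iff, hEH, hEE, htr]
  exact sub_eq_zero.mp hE

/-- A product through a rank-one projector vanishes only if one of the two halves does. -/
lemma mul_rankOne_mul_eq_zero {H : Type*} [Fintype H] [DecidableEq H] {Q X Y : Matrix H H ℂ}
    (h₁ : Q.IsHermitian) (h₂ : Q * Q = Q) (h₃ : Q.trace = 1) (h : X * Q * Y = 0) :
    X * Q = 0 ∨ Q * Y = 0 := by
  obtain ⟨c, w, rfl⟩ := exists_eq_vecMulVec_s8 h₁ h₂ h₃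
  rw [mul_smul_comm, smul_mul_assoc, mul_vecMulVec, vecMulVec_mul, smul_eq_zero] at h
  rw [mul_smul_comm, smul_mul_assoc, mul_vecMulVec, vecMulVec_mul, smul_eq_zero, smul_eq_zero]
  rcases h with h | h
  · exact Or.inl (Or.inl h)
  · rcases vecMulVec_eq_zero.mp h with h | h
    · exact Or.inl (Or.inr (by rw [h, zero_vecMulVec]))
    · exact Or.inr (Or.inr (by rw [h, vecMulVec_zero]))

/-- An element is fixed by the pinching along a complete family of orthogonal idempotents exactly
when it commutes with each of them. -/
lemma pinching_fixed_iff {R L : Type*} [Ring R] [Fintype L] {q : L → R} {s : R}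
    (hid : ∀ j, q j * q j = q j) (hort : ∀ i j, i ≠ j → q i * q j = 0) (hsum : ∑ j, q j = 1) :
    s = ∑ j, q j * s * q j ↔ ∀ j, q j * s = s * q j := by
  constructor
  · intro hs k
    have hl : q k * s = q k * s * q k := by
      conv_lhs => rw [hs]
      rw [Finset.mul_sum, Finset.sum_eq_single k]
      · rw [← mul_assoc, ← mul_assoc, hid]
      · intro j _ hj
        rw [← mul_assoc, ← mul_assoc, hort k j hj.symm, zero_mul, zero_mul]
      · simp
    have hr : s * q k = q k * s * q k := by
      conv_lhs => rw [hs]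
      rw [Finset.sum_mul, Finset.sum_eq_single k]
      · rw [mul_assoc, hid]
      · intro j _ hj
        rw [mul_assoc, hort j k hj, mul_zero]
      · simp
    rw [hl, hr]
  · intro hs
    calc s = (∑ j, q j) * s := by rw [hsum, one_mul]
      _ = ∑ j, q j * s * q j := by
        rw [Finset.sum_mul]
        refine Finset.sum_congr rfl fun j _ => ?_
        rw [mul_assoc, ← hs j, ← mul_assoc, hid]

/-- Commutation of `∑ a, R a ⊗ₖ T a` with `q ⊗ₖ 1`, read off in the blocks given by the
resolution of the identity `R`. -/
lemma commute_kronecker_iff {A B ι : Type*} [Fintype A] [DecidableEq A] [Fintype B]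
    [DecidableEq B] [Fintype ι] {R : ι → Matrix A A ℂ} {T : ι → Matrix B B ℂ}
    (hid : ∀ a, R a * R a = R a) (hort : ∀ a b, a ≠ b → R a * R b = 0) (hsum : ∑ a, R a = 1)
    (q : Matrix A A ℂ) :
    (q ⊗ₖ (1 : Matrix B B ℂ)) * (∑ a, R a ⊗ₖ T a) =
        (∑ a, R a ⊗ₖ T a) * (q ⊗ₖ (1 : Matrix B B ℂ)) ↔
      ∀ h a, R h * q * R a = 0 ∨ T h = T a := by
  have hsR : ∀ a, (∑ a, R a ⊗ₖ T a) * (R a ⊗ₖ (1 : Matrix B B ℂ)) = R a ⊗ₖ T a := by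
    intro a
    rw [Finset.sum_mul, Finset.sum_eq_single a]
    · rw [← mul_kronecker_mul, hid, mul_one]
    · intro b _ hb
      rw [← mul_kronecker_mul, hort b a hb, zero_kronecker]
    · simp
  have hRs : ∀ a, (R a ⊗ₖ (1 : Matrix B B ℂ)) * (∑ a, R a ⊗ₖ T a) = R a ⊗ₖ T a := by
    intro a
    rw [Finset.mul_sum, Finset.sum_eq_single a]
    · rw [← mul_kronecker_mul, hid, one_mul]
    · intro b _ hb
      rw [← mul_kronecker_mul, hort a b hb.symm, zero_kronecker]
    · simp
  set s := ∑ a, R a ⊗ₖ T a with hs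
  have hL : ∀ h a, (R h ⊗ₖ (1 : Matrix B B ℂ)) * ((q ⊗ₖ (1 : Matrix B B ℂ)) * s) *
      (R a ⊗ₖ (1 : Matrix B B ℂ)) = (R h * q * R a) ⊗ₖ T a := by
    intro h a
    rw [mul_assoc, mul_assoc, hsR, ← mul_kronecker_mul, ← mul_kronecker_mul, one_mul, one_mul,
      mul_assoc]
  have hR : ∀ h a, (R h ⊗ₖ (1 : Matrix B B ℂ)) * (s * (q ⊗ₖ (1 : Matrix B B ℂ))) *
      (R a ⊗ₖ (1 : Matrix B B ℂ)) = (R h * q * R a) ⊗ₖ T h := by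
    intro h a
    rw [← mul_assoc, hRs, ← mul_kronecker_mul, ← mul_kronecker_mul, mul_one, mul_one]
  constructor
  · intro hc h a
    have key : (R h * q * R a) ⊗ₖ T h = (R h * q * R a) ⊗ₖ T a := by rw [← hR, ← hL, hc]
    by_cases h0 : R h * q * R a = 0
    · exact Or.inl h0
    · right
      obtain ⟨i, j, hij⟩ : ∃ i j, (R h * q * R a) i j ≠ 0 := by
        by_contra! hcon
        exact h0 (by ext i j; exact hcon i j)
      ext k l
      have := congrFun (congrFun key (i, k)) (j, l)
      simp only [kroneckerMap_apply] at this
      exact mul_left_cancel₀ hij this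
  · intro hc
    have hone : ∑ a, R a ⊗ₖ (1 : Matrix B B ℂ) = 1 := by
      rw [← one_kronecker_one, ← hsum]
      ext x y
      simp [Matrix.sum_apply, Finset.sum_mul]
    -- Both sides agree in every block, and the blocks of an operator sum to it.
    have expand : ∀ X : Matrix (A × B) (A × B) ℂ,
        X = ∑ h, ∑ a, (R h ⊗ₖ (1 : Matrix B B ℂ)) * X * (R a ⊗ₖ (1 : Matrix B B ℂ)) := by
      intro X
      simp only [← Finset.mul_sum, ← Finset.sum_mul, hone, one_mul, mul_one]
    rw [expand ((q ⊗ₖ (1 : Matrix B B ℂ)) * s), expand (s * (q ⊗ₖ (1 : Matrix B B ℂ)))]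
    refine Finset.sum_congr rfl fun h _ => Finset.sum_congr rfl fun a _ => ?_
    rw [hL, hR]
    rcases hc h a with h0 | h0
    · rw [h0, zero_kronecker, zero_kronecker]
    · rw [h0]

lemma ptraceA_kronecker {A B : Type*} [Fintype A] (X : Matrix A A ℂ) (Y : Matrix B B ℂ) :
    ptraceA (X ⊗ₖ Y) = X.trace • Y := by
  ext k l
  simp [ptraceA, Matrix.trace, Finset.sum_mul]

theorem stmt_8 {A B ι κ L : Type*} [Fintype A] [DecidableEq A] [Fintype B] [DecidableEq B]
    [Fintype ι] [Fintype κ] [Fintype L]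
    (PG : ι → Matrix A A ℂ) (PB : κ → Matrix B B ℂ)
    (hPG : IsCSOOP PG) (hPB : IsCSOOP PB)
    (p : ι → κ → ℝ) (hp : ∀ a b, 0 ≤ p a b)
    (ρ : Matrix (A × B) (A × B) ℂ) (hρ : IsDensity ρ)
    (hρdef : ρ = ∑ a, ∑ b, (p a b : ℂ) • (PG a ⊗ₖ PB b))
    (G₁ : Matrix A A ℂ) (hG : G₁ ∈ Matrix.unitaryGroup A ℂ)
    (σ : Matrix (A × B) (A × B) ℂ)
    (hσdef : σ = (G₁ ⊗ₖ (1 : Matrix B B ℂ)) * ρ * (G₁ ⊗ₖ (1 : Matrix B B ℂ))ᴴ)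
    (Q : L → Matrix A A ℂ) (hQ : IsCSOOP Q) :
    (σ = ∑ j, (Q j ⊗ₖ (1 : Matrix B B ℂ)) * σ * (Q j ⊗ₖ (1 : Matrix B B ℂ))) ↔
      ∀ h a j, G₁ * PG h * G₁ᴴ * Q j ≠ 0 → G₁ * PG a * G₁ᴴ * Q j ≠ 0 →
        ptraceA (ρ * (PG h ⊗ₖ (1 : Matrix B B ℂ))) =
          ptraceA (ρ * (PG a ⊗ₖ (1 : Matrix B B ℂ))) := by
  obtain ⟨pH, pI, pT, pO, pS⟩ := hPG
  obtain ⟨qH, qI, qT, qO, qS⟩ := hQ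
  have hGG : G₁ᴴ * G₁ = 1 := mem_unitaryGroup_iff'.mp hG
  have hGG' : G₁ * G₁ᴴ = 1 := mem_unitaryGroup_iff.mp hG
  set T : ι → Matrix B B ℂ := fun a => ∑ b, (p a b : ℂ) • PB b with hT
  have hρT : ρ = ∑ a, PG a ⊗ₖ T a := by
    rw [hρdef]
    refine Finset.sum_congr rfl fun a _ => ?_
    ext x y
    simp only [hT, Matrix.sum_apply, Matrix.smul_apply, kroneckerMap_apply, smul_eq_mul, Finset.mul_sum]
    exact Finset.sum_congr rfl fun b _ => by ring
  have hpt : ∀ h, ptraceA (ρ * (PG h ⊗ₖ (1 : Matrix B B ℂ))) = T h := by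
    intro h
    have : ρ * (PG h ⊗ₖ (1 : Matrix B B ℂ)) = PG h ⊗ₖ T h := by
      rw [hρT, Finset.sum_mul, Finset.sum_eq_single h]
      · rw [← mul_kronecker_mul, pI, mul_one]
      · intro b _ hb
        rw [← mul_kronecker_mul, pO b h hb, zero_kronecker]
      · simp
    rw [this, ptraceA_kronecker, pT, one_smul]
  set R : ι → Matrix A A ℂ := fun a => G₁ * PG a * G₁ᴴ with hR
  have hRR : ∀ a b, R a * R b = G₁ * (PG a * PG b) * G₁ᴴ := by
    intro a b
    calc R a * R b = G₁ * PG a * (G₁ᴴ * G₁) * PG b * G₁ᴴ := by simp only [hR, mul_assoc]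
      _ = _ := by rw [hGG, mul_one]; simp only [mul_assoc]
  have rI : ∀ a, R a * R a = R a := fun a => by rw [hRR, pI]
  have rO : ∀ a b, a ≠ b → R a * R b = 0 := fun a b hab => by
    rw [hRR, pO a b hab, mul_zero, zero_mul]
  have rS : ∑ a, R a = 1 := by
    simp only [hR, ← Finset.sum_mul, ← Finset.mul_sum, pS, mul_one, hGG']
  have rH : ∀ a, (R a)ᴴ = R a := fun a => by
    simp only [hR, conjTranspose_mul, conjTranspose_conjTranspose, (pH a).eq, mul_assoc]
  have hσ : σ = ∑ a, R a ⊗ₖ T a := by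
    rw [hσdef, hρT, Finset.mul_sum, Finset.sum_mul]
    refine Finset.sum_congr rfl fun a _ => ?_
    rw [conjTranspose_kronecker, ← mul_kronecker_mul, ← mul_kronecker_mul, conjTranspose_one,
      one_mul, mul_one]
  have kI : ∀ j, (Q j ⊗ₖ (1 : Matrix B B ℂ)) * (Q j ⊗ₖ (1 : Matrix B B ℂ)) = Q j ⊗ₖ 1 :=
    fun j => by rw [← mul_kronecker_mul, qI, mul_one]
  have kO : ∀ i j, i ≠ j → (Q i ⊗ₖ (1 : Matrix B B ℂ)) * (Q j ⊗ₖ (1 : Matrix B B ℂ)) = 0 :=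
    fun i j hij => by rw [← mul_kronecker_mul, qO i j hij, zero_kronecker]
  have kS : ∑ j, Q j ⊗ₖ (1 : Matrix B B ℂ) = 1 := by
    rw [← one_kronecker_one, ← qS]
    ext x y
    simp [Matrix.sum_apply, Finset.sum_mul]
  have hadj : ∀ a j, Q j * R a = 0 ↔ R a * Q j = 0 := by
    intro a j
    rw [← conjTranspose_eq_zero, conjTranspose_mul, rH, (qH j).eq]
  rw [pinching_fixed_iff kI kO kS]
  simp only [hpt]
  rw [hσ]
  simp only [commute_kronecker_iff rI rO rS]
  constructor
  · intro H h a j h₁ h₂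
    refine (H j h a).resolve_left fun h0 => ?_
    rcases mul_rankOne_mul_eq_zero (qH j) (qI j) (qT j) h0 with h0 | h0
    · exact h₁ h0
    · exact h₂ ((hadj a j).mp h0)
  · intro H j h a
    by_cases h₁ : R h * Q j = 0
    · exact Or.inl (by rw [h₁, zero_mul])
    · by_cases h₂ : R a * Q j = 0
      · exact Or.inl (by rw [mul_assoc, (hadj a j).mpr h₂, mul_zero])
      · exact Or.inr (H h a j h₁ h₂)
end
end

section
/- Let ρ = ρ_1 ⊗ ⋯ ⊗ ρ_n be a density operator on (ℂ²)^{⊗n} where each ρ_k is a 2×2 density matrix diagonal in the standard basis with ⟨1|ρ_k|1⟩ ≤ ⟨0|ρ_k|0⟩. Let S : 𝔽₂ⁿ → 𝔽₂ⁿ be an affine involution (S(v) = M v + K with M 𝔽₂-linear and S ∘ S = id), and let Ŝ be the corresponding permutation matrix on (ℂ²)^{⊗n}, acting by Ŝ|v⟩ = |S(v)⟩ on standard basis states. Then Ŝ ρ Ŝ† = ρ if and only if ⟨v| (Ŝ ρ Ŝ† − ρ) |v⟩ = 0 for the n+1 standard basis states indexed by v = 0 and by v = δ_l for each l ∈ {1,…,n},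 where δ_l is the l-th standard unit vector of 𝔽₂ⁿ. -/
/-!
Write `r k ∈ [0, 1]` for the ratio `⟨1|ρ_k|1⟩ / ⟨0|ρ_k|0⟩` and `weight r v = ∏_{k : v k = 1} r k`, so
that the diagonal entry of `ρ` at `v` is `c * weight r v` with `c > 0`. Invariance of `ρ` means
`weight r (S v) = weight r v` for all `v`.

Since `r ≤ 1`, the weight is supermultiplicative: `weight u * weight v ≤ weight (u + v)`, and
`weight v` is the product of the `weight δ_l` over the support of `v`. The condition at `0` says
`weight K = 1`, so adding `K` does not change weights, and the conditions at `δ_l` become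
`weight (M δ_l) = weight δ_l`. Supermultiplicativity then gives `weight v ≤ weight (M v)` for all
`v`, and applying this to `M v` together with `M² = 1` gives the reverse inequality. Working with
ratios in `[0, 1]`, not with energies `-log (r k)`, covers pure factors (`r k = 0`) uniformly.
-/

open Matrix
open scoped Kronecker ComplexOrder Classical

noncomputable section

/-- The permutation matrix of a self-inverse map `S`, acting by `|v⟩ ↦ |S v⟩`. -/
def permMatF {V : Type*} [DecidableEq V] (S : V → V) : Matrix V V ℂ :=
  Matrix.of fun x y => if x = S y then 1 else 0

/-- The product of `r k` over the support of `v`. -/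
def weight {n : ℕ} (r : Fin n → ℝ) (v : Fin n → ZMod 2) : ℝ :=
  ∏ k, if v k = 0 then 1 else r k

lemma weight_zero {n : ℕ} (r : Fin n → ℝ) : weight r 0 = 1 := by simp [weight]

lemma weight_single {n : ℕ} (r : Fin n → ℝ) (l : Fin n) :
    weight r (Pi.single l 1) = r l := by
  unfold weight
  rw [Finset.prod_eq_single l]
  · simp
  · intro k _ hk
    simp [Pi.single_eq_of_ne hk]
  · simp

lemma weight_nonneg {n : ℕ} {r : Fin n → ℝ} (h0 : ∀ k, 0 ≤ r k) (v : Fin n → ZMod 2) :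
    0 ≤ weight r v := by
  refine Finset.prod_nonneg fun k _ => ?_
  split_ifs
  exacts [zero_le_one, h0 k]

lemma weight_mul_le {n : ℕ} {r : Fin n → ℝ} (h0 : ∀ k, 0 ≤ r k) (h1 : ∀ k, r k ≤ 1)
    (u v : Fin n → ZMod 2) : weight r u * weight r v ≤ weight r (u + v) := by
  unfold weight
  rw [← Finset.prod_mul_distrib]
  refine Finset.prod_le_prod (fun k _ => ?_) (fun k _ => ?_)
  · have := h0 k
    split_ifs <;> positivity
  · have a := h0 k
    have b := h1 k
    have key : ∀ x y : ZMod 2, x ≠ 0 → y ≠ 0 → x + y = 0 := by decide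
    rw [Pi.add_apply]
    by_cases hu : u k = 0 <;> by_cases hv : v k = 0
    · simp [hu, hv]
    · simp [hu, hv]
    · simp [hu, hv]
    · simp only [hu, hv, key _ _ hu hv, if_true, if_false]
      nlinarith

lemma prod_weight_le {n : ℕ} {r : Fin n → ℝ} (h0 : ∀ k, 0 ≤ r k) (h1 : ∀ k, r k ≤ 1)
    {ι : Type*} (s : Finset ι) (w : ι → Fin n → ZMod 2) :
    ∏ i ∈ s, weight r (w i) ≤ weight r (∑ i ∈ s, w i) := by
  induction s using Finset.induction_on with
  | empty => simp [weight_zero]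
  | insert a s ha ih =>
    rw [Finset.prod_insert ha, Finset.sum_insert ha]
    exact (mul_le_mul_of_nonneg_left ih (weight_nonneg h0 _)).trans (weight_mul_le h0 h1 _ _)

/-- Adding a vector of weight one preserves weights. -/
lemma weight_add_of_weight_eq_one {n : ℕ} {r : Fin n → ℝ} (h0 : ∀ k, 0 ≤ r k)
    (h1 : ∀ k, r k ≤ 1) {K : Fin n → ZMod 2} (hK : weight r K = 1) (v : Fin n → ZMod 2) :
    weight r (v + K) = weight r v := by
  apply le_antisymm
  · have h := weight_mul_le h0 h1 (v + K) K
    have e : v + K + K = v := by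
      funext k
      simp [add_assoc, CharTwo.add_self_eq_zero]
    rwa [hK, mul_one, e] at h
  · have h := weight_mul_le h0 h1 v K
    rwa [hK, mul_one] at h

/-- A linear map preserving the weight of every unit vector does not decrease weights. -/
lemma weight_le_weight_map {n : ℕ} {r : Fin n → ℝ} (h0 : ∀ k, 0 ≤ r k) (h1 : ∀ k, r k ≤ 1)
    (M : (Fin n → ZMod 2) →ₗ[ZMod 2] (Fin n → ZMod 2))
    (hM : ∀ l, weight r (M (Pi.single l 1)) = r l) (v : Fin n → ZMod 2) :
    weight r v ≤ weight r (M v) := by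
  have hv : M v = ∑ l, v l • M (Pi.single l 1) := by
    conv_lhs => rw [pi_eq_sum_univ' v]
    simp [map_sum]
  rw [hv]
  refine le_trans (le_of_eq ?_) (prod_weight_le h0 h1 _ _)
  conv_lhs => unfold weight
  refine Finset.prod_congr rfl fun l _ => ?_
  have key : ∀ x : ZMod 2, x ≠ 0 → x = 1 := by decide
  by_cases hl : v l = 0
  · simp [hl, weight_zero]
  · rw [if_neg hl, key _ hl, one_smul, hM]

/-- An affine involution preserving the weights of `0` and of the unit vectors preserves all
weights. -/
lemma weight_affine_involution {n : ℕ} {r : Fin n → ℝ} (h0 : ∀ k, 0 ≤ r k) (h1 : ∀ k, r k ≤ 1)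
    (M : (Fin n → ZMod 2) →ₗ[ZMod 2] (Fin n → ZMod 2)) (K : Fin n → ZMod 2)
    (S : (Fin n → ZMod 2) → (Fin n → ZMod 2))
    (hSaff : ∀ v, S v = M v + K) (hSinv : ∀ v, S (S v) = v)
    (hz : weight r (S 0) = weight r 0)
    (hs : ∀ l, weight r (S (Pi.single l 1)) = weight r (Pi.single l 1))
    (v : Fin n → ZMod 2) : weight r (S v) = weight r v := by
  have hK : weight r K = 1 := by
    rwa [hSaff, map_zero, zero_add, weight_zero] at hz
  have hadd := weight_add_of_weight_eq_one h0 h1 hK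
  have hM : ∀ l, weight r (M (Pi.single l 1)) = r l := fun l => by
    rw [← hadd, ← hSaff, hs, weight_single]
  have hMM : M (M v) = v := by
    have e0 := hSinv 0
    have ev := hSinv v
    simp only [hSaff, map_add, map_zero, zero_add] at e0 ev
    rwa [add_assoc, e0, add_zero] at ev
  rw [hSaff, hadd]
  refine le_antisymm ?_ (weight_le_weight_map h0 h1 M hM v)
  have h := weight_le_weight_map h0 h1 M hM (M v)
  rwa [hMM] at h

lemma permMatF_conj_apply {V : Type*} [Fintype V] [DecidableEq V] (S : V → V)
    (hS : ∀ v, S (S v) = v) (A : Matrix V V ℂ) (x y : V) :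
    (permMatF S * A * (permMatF S)ᴴ) x y = A (S x) (S y) := by
  have e : ∀ a b : V, a = S b ↔ b = S a := fun a b =>
    ⟨fun h => by rw [h, hS], fun h => by rw [h, hS]⟩
  simp [Matrix.mul_apply, permMatF, e x, e y]

lemma prodOp_apply_of_ne {n : ℕ} {ρk : Fin n → Matrix (ZMod 2) (ZMod 2) ℂ}
    (hdiag : ∀ k, (ρk k).IsDiag) {x y : Fin n → ZMod 2} (hxy : x ≠ y) :
    prodOp ρk x y = 0 := by
  obtain ⟨k, hk⟩ := Function.ne_iff.mp hxy
  exact Finset.prod_eq_zero (Finset.mem_univ k) (hdiag k hk)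

/-- The diagonal entries of a biased product state are a fixed nonzero multiple of a weight with
ratios in `[0, 1]`. -/
lemma exists_weight {n : ℕ} (ρk : Fin n → Matrix (ZMod 2) (ZMod 2) ℂ)
    (hdens : ∀ k, IsDensity (ρk k)) (hbias : ∀ k, ρk k 1 1 ≤ ρk k 0 0) :
    ∃ (c : ℂ) (r : Fin n → ℝ), c ≠ 0 ∧ (∀ k, 0 ≤ r k) ∧ (∀ k, r k ≤ 1) ∧
      ∀ v, prodOp ρk v v = c * (weight r v : ℂ) := by
  have hnn : ∀ k i, 0 ≤ ρk k i i := fun k i => (hdens k).1.diag_nonneg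
  have hre : ∀ k i, ρk k i i = ((ρk k i i).re : ℂ) := fun k i =>
    (Complex.eq_re_of_ofReal_le (r := 0) (by simpa using hnn k i))
  have h1 : ∀ k, 0 ≤ (ρk k 1 1).re := fun k => (Complex.le_def.mp (hnn k 1)).1
  have hle : ∀ k, (ρk k 1 1).re ≤ (ρk k 0 0).re := fun k => (Complex.le_def.mp (hbias k)).1
  -- The larger of two nonnegative numbers with sum one is positive.
  have h0 : ∀ k, 0 < (ρk k 0 0).re := fun k => by
    have ht : ρk k 0 0 + ρk k 1 1 = 1 := by
      have h := (hdens k).2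
      have e : (ρk k).trace = ρk k 0 0 + ρk k 1 1 := Fin.sum_univ_two (fun i => ρk k i i)
      rwa [e] at h
    have := congrArg Complex.re ht
    simp only [Complex.add_re, Complex.one_re] at this
    linarith [hle k]
  have hne : ∀ k, ρk k 0 0 ≠ 0 := fun k h => by
    have := h0 k
    simp [h] at this
  refine ⟨∏ k, ρk k 0 0, fun k => (ρk k 1 1).re / (ρk k 0 0).re,
    Finset.prod_ne_zero_iff.mpr fun k _ => hne k,
    fun k => div_nonneg (h1 k) (h0 k).le, fun k => (div_le_one (h0 k)).mpr (hle k), fun v => ?_⟩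
  unfold weight
  rw [Complex.ofReal_prod, ← Finset.prod_mul_distrib]
  change ∏ k, ρk k (v k) (v k) = _
  refine Finset.prod_congr rfl fun k _ => ?_
  have key : ∀ x : ZMod 2, x ≠ 0 → x = 1 := by decide
  by_cases hv : v k = 0
  · simp [hv]
  · rw [if_neg hv, key _ hv, Complex.ofReal_div, ← hre, ← hre, mul_div_cancel₀ _ (hne k)]

theorem stmt_10 {n : ℕ}
    (ρk : Fin n → Matrix (ZMod 2) (ZMod 2) ℂ)
    (hdens : ∀ k, IsDensity (ρk k)) (hdiag : ∀ k, (ρk k).IsDiag)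
    (hbias : ∀ k, ρk k 1 1 ≤ ρk k 0 0)
    (M : (Fin n → ZMod 2) →ₗ[ZMod 2] (Fin n → ZMod 2)) (K : Fin n → ZMod 2)
    (S : (Fin n → ZMod 2) → (Fin n → ZMod 2))
    (hSaff : ∀ v, S v = M v + K) (hSinv : ∀ v, S (S v) = v) :
    permMatF S * prodOp ρk * (permMatF S)ᴴ = prodOp ρk ↔
      ((permMatF S * prodOp ρk * (permMatF S)ᴴ - prodOp ρk)
          (0 : Fin n → ZMod 2) (0 : Fin n → ZMod 2) = 0 ∧
        ∀ l : Fin n,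
          (permMatF S * prodOp ρk * (permMatF S)ᴴ - prodOp ρk)
            (Pi.single l 1) (Pi.single l 1) = 0) := by
  obtain ⟨c, r, hc, h0, h1, hw⟩ := exists_weight ρk hdens hbias
  have hiff : ∀ v, (permMatF S * prodOp ρk * (permMatF S)ᴴ - prodOp ρk) v v = 0 ↔
      weight r (S v) = weight r v := fun v => by
    rw [Matrix.sub_apply, permMatF_conj_apply S hSinv, sub_eq_zero, hw, hw,
      mul_right_inj' hc, Complex.ofReal_inj]
  constructor
  · intro h
    simp [h]
  · rintro ⟨hz, hs⟩
    have hall := weight_affine_involution h0 h1 M K S hSaff hSinv ((hiff 0).mp hz)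
      fun l => (hiff _).mp (hs l)
    ext x y
    rw [permMatF_conj_apply S hSinv]
    by_cases hxy : x = y
    · rw [hxy, hw, hw, hall]
    · have hS : S x ≠ S y := fun h => hxy (by rw [← hSinv x, h, hSinv])
      rw [prodOp_apply_of_ne hdiag hxy, prodOp_apply_of_ne hdiag hS]
end
end

section
/- Let e : {1,…,n} → ℝ satisfy 0 ≤ e_k ≤ 1 for all k, let f(v) = ∏_{k ∈ supp(v)} e_k, and let T : 𝔽₂ⁿ → 𝔽₂ⁿ be an 𝔽₂-linear involution such that f(T(δ_k)) = e_k for every k. Then for every index k there exists m ∈ supp(T(δ_k)) with e_m = e_k. -/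
/-!
Since all weights lie in `[0, 1]`, a product of them is at most each of its factors, so
`e k = f (T δ_k) ≤ e m` for every `m ∈ supp (T δ_k)` (`fwt_le_of_mem`). Expanding `T δ_k` in the
standard basis and applying `T` gives `δ_k = ∑_{m ∈ supp (T δ_k)} T δ_m`; hence some
`m ∈ supp (T δ_k)` satisfies `k ∈ supp (T δ_m)`. For this `m` the inequality holds in both
directions, so `e m = e k`.
-/

open scoped Classical

noncomputable section

/-- The multiplicative weight `f(v) = ∏_{k ∈ supp v} e k` associated to `e`. -/
def fwt {n : ℕ} (e : Fin n → ℝ) (v : Fin n → ZMod 2) : ℝ :=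
  ∏ k ∈ Finset.univ.filter (fun k => v k = 1), e k

theorem fwt_le_of_mem {n : ℕ} (e : Fin n → ℝ) (he0 : ∀ k, 0 ≤ e k) (he1 : ∀ k, e k ≤ 1)
    (v : Fin n → ZMod 2) (j : Fin n) (hj : v j = 1) : fwt e v ≤ e j := by
  unfold fwt
  rw [← Finset.mul_prod_erase _ e (a := j) (by simp [hj])]
  exact mul_le_of_le_one_right (he0 j)
    (Finset.prod_le_one (fun i _ => he0 i) (fun i _ => he1 i))

theorem stmt_14 {n : ℕ}
    (e : Fin n → ℝ) (he0 : ∀ k, 0 ≤ e k) (he1 : ∀ k, e k ≤ 1)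
    (T : (Fin n → ZMod 2) →ₗ[ZMod 2] (Fin n → ZMod 2))
    (hTinv : ∀ v, T (T v) = v)
    (hTf : ∀ k, fwt e (T (Pi.single k 1)) = e k) :
    ∀ k : Fin n, ∃ m : Fin n, T (Pi.single k 1) m = 1 ∧ e m = e k := by
  intro k
  have hexp : ∑ m, T (Pi.single k 1) m * T (Pi.single m 1) k = 1 := by
    have h := congrFun (hTinv (Pi.single k 1)) k
    rw [LinearMap.pi_apply_eq_sum_univ T (T (Pi.single k 1))] at h
    have hs : ∀ i : Fin n, (fun j => if i = j then (1 : ZMod 2) else 0) = Pi.single i 1 := by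
      intro i
      ext j
      simp [Pi.single_apply, eq_comm]
    simpa [hs, Finset.sum_apply] using h
  obtain ⟨m, -, hm⟩ : ∃ m ∈ Finset.univ, T (Pi.single k 1) m * T (Pi.single m 1) k ≠ 0 :=
    Finset.exists_ne_zero_of_sum_ne_zero (by rw [hexp]; exact one_ne_zero)
  have h2 : ∀ a : ZMod 2, a ≠ 0 → a = 1 := by decide
  have hkm := h2 _ (left_ne_zero_of_mul hm)
  have hmk := h2 _ (right_ne_zero_of_mul hm)
  refine ⟨m, hkm, le_antisymm ?_ ?_⟩
  · exact (hTf m).symm.le.trans (fwt_le_of_mem e he0 he1 _ k hmk)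
  · exact (hTf k).symm.le.trans (fwt_le_of_mem e he0 he1 _ m hkm)
end
end

section
/- Let e : {1,…,n} → ℝ satisfy 0 ≤ e_k ≤ 1 for all k, let f(v) = ∏_{k ∈ supp(v)} e_k, and let T : 𝔽₂ⁿ → 𝔽₂ⁿ be an 𝔽₂-linear involution such that f(T(δ_k)) = e_k for every k. Then for every index k with e_k > 0 there exists m ∈ supp(T(δ_k)) such that e_m = e_k and e_l = 1 for every l ∈ supp(T(δ_k)) with l ≠ m. -/
/-!
A product of numbers in `[0, 1]` is at most each of its factors, so `l ∈ supp (T δ_k)` forces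
`e k ≤ e l` (`le_of_apply_eq_one`). Reading `δ_k = T (T δ_k) = ∑ l, (T δ_k) l • T δ_l` at
coordinate `k` yields an `m` with `m ∈ supp (T δ_k)` and `k ∈ supp (T δ_m)`, hence `e m = e k`.
Cancelling the positive factor `e m = e k` from `f (T δ_k) = e k`, the remaining factors, all in
`[0, 1]`, have product `1`, so each of them is `1`.
-/

open scoped Classical

noncomputable section

theorem zmod_two_eq_one {a : ZMod 2} (h : a ≠ 0) : a = 1 := by
  revert a; decide

theorem le_of_apply_eq_one {n : ℕ}
    (e : Fin n → ℝ) (he0 : ∀ k, 0 ≤ e k) (he1 : ∀ k, e k ≤ 1)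
    (T : (Fin n → ZMod 2) →ₗ[ZMod 2] (Fin n → ZMod 2))
    (hTf : ∀ k, fwt e (T (Pi.single k 1)) = e k)
    {k l : Fin n} (h : T (Pi.single k 1) l = 1) : e k ≤ e l := by
  rw [← hTf k, fwt, ← Finset.mul_prod_erase _ e (by simpa using h : l ∈ Finset.univ.filter _)]
  exact mul_le_of_le_one_right (he0 l)
    (Finset.prod_le_one (fun i _ => he0 i) (fun i _ => he1 i))

/-- The diagonal entry `(k, k)` of `T * T = 1` has a nonzero summand. -/
theorem exists_mutual {n : ℕ}
    (T : (Fin n → ZMod 2) →ₗ[ZMod 2] (Fin n → ZMod 2))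
    (hTinv : ∀ v, T (T v) = v) (k : Fin n) :
    ∃ m, T (Pi.single k 1) m = 1 ∧ T (Pi.single m 1) k = 1 := by
  have h : T (T (Pi.single k 1)) k = 1 := by rw [hTinv]; simp
  rw [LinearMap.pi_apply_eq_sum_univ T (T (Pi.single k 1)), Finset.sum_apply] at h
  obtain ⟨m, -, hm⟩ := Finset.exists_ne_zero_of_sum_ne_zero (h.trans_ne one_ne_zero)
  rw [Pi.smul_apply, smul_eq_mul] at hm
  have hs : (fun j => if m = j then (1 : ZMod 2) else 0) = Pi.single m 1 := by
    ext j; simp [Pi.single_apply, eq_comm]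
  rw [hs] at hm
  exact ⟨m, zmod_two_eq_one (left_ne_zero_of_mul hm), zmod_two_eq_one (right_ne_zero_of_mul hm)⟩

theorem stmt_15 {n : ℕ}
    (e : Fin n → ℝ) (he0 : ∀ k, 0 ≤ e k) (he1 : ∀ k, e k ≤ 1)
    (T : (Fin n → ZMod 2) →ₗ[ZMod 2] (Fin n → ZMod 2))
    (hTinv : ∀ v, T (T v) = v)
    (hTf : ∀ k, fwt e (T (Pi.single k 1)) = e k) :
    ∀ k : Fin n, 0 < e k →
      ∃ m : Fin n, T (Pi.single k 1) m = 1 ∧ e m = e k ∧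
        ∀ l : Fin n, T (Pi.single k 1) l = 1 → l ≠ m → e l = 1 := by
  intro k hk
  obtain ⟨m, hm, hm'⟩ := exists_mutual T hTinv k
  have hmk : e m = e k := le_antisymm (le_of_apply_eq_one e he0 he1 T hTf hm')
    (le_of_apply_eq_one e he0 he1 T hTf hm)
  refine ⟨m, hm, hmk, fun l hl hlm => le_antisymm (he1 l) ?_⟩
  have h := hTf k
  rw [fwt, ← Finset.mul_prod_erase _ e (by simpa using hm : m ∈ Finset.univ.filter _), hmk] at h
  have h1 := (mul_eq_left₀ hk.ne').1 h
  rw [← Finset.mul_prod_erase _ e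
    (by simpa using ⟨hlm, hl⟩ : l ∈ (Finset.univ.filter _).erase m)] at h1
  rw [← h1]
  exact mul_le_of_le_one_right (he0 l)
    (Finset.prod_le_one (fun i _ => he0 i) (fun i _ => he1 i))
end
end

section
/- Let e : {1,…,n} → ℝ satisfy 0 ≤ e_k ≤ 1 for all k, let f(v) = ∏_{k ∈ supp(v)} e_k, and let T : 𝔽₂ⁿ → 𝔽₂ⁿ be an 𝔽₂-linear involution such that f(T(δ_k)) = e_k for every k. Let C_1 = {m : e_m = 1}. Then for any two distinct indices k ≠ l with e_k = e_l = e and 0 < e < 1, the sets supp(T(δ_k)) \ C_1 and supp(T(δ_l)) \ C_1 are distinct; that is, distinct indices with the same weight e ∈ (0,1) are mapped by T to distinct non-unit-weight indices. -/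
/-!
Call an index with `e m = 1` a unit index. Since all weights lie in `[0, 1]`, a vector of weight `1`
is supported on unit indices (`eq_one_of_fwt_eq_one`), so `T` preserves the space of vectors supported
on unit indices (`apply_eq_zero_of_support`). If the images of `δ_k` and `δ_l` had the same support
off the unit indices, their difference `T (δ_k - δ_l)` would lie in that space, hence so would
`δ_k - δ_l = T (T (δ_k - δ_l))`. But this vector is nonzero at `k`, and `e k < 1`.
-/

open scoped Classical

noncomputable section

lemma eq_one_of_fwt_eq_one {n : ℕ} {e : Fin n → ℝ} (he0 : ∀ k, 0 ≤ e k) (he1 : ∀ k, e k ≤ 1)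
    {v : Fin n → ZMod 2} (hv : fwt e v = 1) {p : Fin n} (hp : v p = 1) : e p = 1 := by
  refine le_antisymm (he1 p) ?_
  have hmem : p ∈ Finset.univ.filter (fun k => v k = 1) := by simp [hp]
  rw [← hv, fwt, ← Finset.mul_prod_erase _ _ hmem]
  exact mul_le_of_le_one_right (he0 p) (Finset.prod_le_one (fun i _ => he0 i) fun i _ => he1 i)

lemma zmod_two_cases (a : ZMod 2) : a = 0 ∨ a = 1 := by
  revert a; decide

/-- `T` preserves the space of vectors supported on indices of weight `1`. -/
lemma apply_eq_zero_of_support {n : ℕ} {e : Fin n → ℝ} (he0 : ∀ k, 0 ≤ e k) (he1 : ∀ k, e k ≤ 1)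
    (T : (Fin n → ZMod 2) →ₗ[ZMod 2] (Fin n → ZMod 2))
    (hTf : ∀ k, fwt e (T (Pi.single k 1)) = e k)
    {w : Fin n → ZMod 2} (hw : ∀ m, e m ≠ 1 → w m = 0) {p : Fin n} (hp : e p ≠ 1) :
    T w p = 0 := by
  rw [LinearMap.pi_apply_eq_sum_univ T w, Finset.sum_apply]
  refine Finset.sum_eq_zero fun m _ => ?_
  by_cases hm : e m = 1
  · have hsingle : (fun j => if m = j then (1 : ZMod 2) else 0) = Pi.single m 1 := by
      ext j; simp [Pi.single_apply, eq_comm]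
    rw [hsingle]
    rcases zmod_two_cases (T (Pi.single m 1) p) with h | h
    · simp [h]
    · exact absurd (eq_one_of_fwt_eq_one he0 he1 ((hTf m).trans hm) h) hp
  · simp [hw m hm]

theorem stmt_16 {n : ℕ}
    (e : Fin n → ℝ) (he0 : ∀ k, 0 ≤ e k) (he1 : ∀ k, e k ≤ 1)
    (T : (Fin n → ZMod 2) →ₗ[ZMod 2] (Fin n → ZMod 2))
    (hTinv : ∀ v, T (T v) = v)
    (hTf : ∀ k, fwt e (T (Pi.single k 1)) = e k) :
    ∀ k l : Fin n, k ≠ l → e k = e l → 0 < e k → e k < 1 →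
      (Finset.univ.filter fun m : Fin n => T (Pi.single k 1) m = 1 ∧ e m ≠ 1) ≠
        (Finset.univ.filter fun m : Fin n => T (Pi.single l 1) m = 1 ∧ e m ≠ 1) := by
  intro k l hkl _ _ hk1 hsupp
  have hw : ∀ m, e m ≠ 1 → T (Pi.single k 1 - Pi.single l 1) m = 0 := by
    intro m hm
    have hiff := Finset.ext_iff.mp hsupp m
    simp only [Finset.mem_filter, Finset.mem_univ, true_and, hm, ne_eq, not_false_eq_true,
      and_true] at hiff
    rw [map_sub, Pi.sub_apply, sub_eq_zero]
    rcases zmod_two_cases (T (Pi.single k 1) m) with h | h <;>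
      rcases zmod_two_cases (T (Pi.single l 1) m) with h' | h' <;> simp_all
  have hzero := apply_eq_zero_of_support he0 he1 T hTf hw hk1.ne
  rw [hTinv] at hzero
  simp [hkl] at hzero
end
end

section
/- Let e : {1,…,n} → ℝ satisfy 0 ≤ e_k ≤ 1 for all k, let f(v) = ∏_{k ∈ supp(v)} e_k, and let T : 𝔽₂ⁿ → 𝔽₂ⁿ be an 𝔽₂-linear involution such that f(T(δ_k)) = e_k for every k. Let C_0 = {k : e_k = 0}. Then for every v ∈ 𝔽₂ⁿ, if supp(v) ∩ C_0 ≠ ∅ then supp(T(v)) ∩ C_0 ≠ ∅. -/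
/-!
Let `W` be the coordinate subspace of vectors whose support avoids `{k | e k = 0}`.
If `e m ≠ 0`, the product `fwt e (T δ_m) = e m` has no zero factor, so `T δ_m ∈ W`; hence
`T` maps `W` into itself. As `T` is an involution, `T v ∈ W` gives `v = T (T v) ∈ W`, which is
the contrapositive of the claim.
-/

open scoped Classical

noncomputable section

theorem stmt_17 {n : ℕ}
    (e : Fin n → ℝ) (he0 : ∀ k, 0 ≤ e k) (he1 : ∀ k, e k ≤ 1)
    (T : (Fin n → ZMod 2) →ₗ[ZMod 2] (Fin n → ZMod 2))
    (hTinv : ∀ v, T (T v) = v)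
    (hTf : ∀ k, fwt e (T (Pi.single k 1)) = e k) :
    ∀ v : Fin n → ZMod 2, (∃ k, v k = 1 ∧ e k = 0) → ∃ m, T v m = 1 ∧ e m = 0 := by
  intro v ⟨k, hvk, hek⟩
  by_contra! h
  have two : ∀ x : ZMod 2, x ≠ 1 → x = 0 := by decide
  -- Expand `v k = T (T v) k` in the standard basis; every term vanishes.
  have hv : v k = ∑ m, T v m * T (Pi.single m 1) k := by
    conv_lhs => rw [← hTinv v, LinearMap.pi_apply_eq_sum_univ T (T v)]
    have hs (m : Fin n) : (fun j => if m = j then (1 : ZMod 2) else 0) = Pi.single m 1 := by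
      ext j
      simp [Pi.single_apply, eq_comm]
    simp [hs]
  have h0 : ∑ m, T v m * T (Pi.single m 1) k = 0 := by
    refine Finset.sum_eq_zero fun m _ => ?_
    by_cases hm : T v m = 1
    · have hk : T (Pi.single m 1) k ≠ 1 := fun hk => h m hm <| by
        rw [← hTf m]
        exact Finset.prod_eq_zero (Finset.mem_filter.2 ⟨Finset.mem_univ k, hk⟩) hek
      rw [two _ hk, mul_zero]
    · rw [two _ hm, zero_mul]
  rw [hv, h0] at hvk
  exact zero_ne_one hvk
end
end

section
/- Let e : {1,…,n} → ℝ satisfy 0 ≤ e_k ≤ 1 for all k, let f(v) = ∏_{k ∈ supp(v)} e_k, and let T : 𝔽₂ⁿ → 𝔽₂ⁿ be an 𝔽₂-linear involution such that f(T(δ_k)) = e_k for every k. Then f(T(v)) = f(v) for every v ∈ 𝔽₂ⁿ. -/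
/-!
Two vectors `a`, `b` satisfy `f a * f b ≤ f (a + b)`: the support of `a + b` is the symmetric
difference of the two supports, and the coordinates in both supports contribute a factor
`e k ^ 2 ≤ 1` to the left-hand side only (`fwt_mul_le_fwt_add`). Expanding `v` in the standard basis
and applying this to the images of the basis vectors gives `f v ≤ f (T v)` for every `v`
(`fwt_le_fwt_map`). Replacing `v` by `T v` and using `T (T v) = v` gives the reverse inequality.
-/

open scoped Classical

noncomputable section

theorem fwt_mul_le_fwt_add {n : ℕ} (e : Fin n → ℝ) (he0 : ∀ k, 0 ≤ e k) (he1 : ∀ k, e k ≤ 1)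
    (a b : Fin n → ZMod 2) : fwt e a * fwt e b ≤ fwt e (a + b) := by
  unfold fwt
  rw [Finset.prod_filter, Finset.prod_filter, Finset.prod_filter, ← Finset.prod_mul_distrib]
  have zero_or_one : ∀ x : ZMod 2, x = 0 ∨ x = 1 := by decide
  have two : (1 + 1 : ZMod 2) = 0 := by decide
  refine Finset.prod_le_prod (fun k _ => ?_) (fun k _ => ?_)
  · have := he0 k
    split_ifs <;> positivity
  · rcases zero_or_one (a k) with ha | ha <;> rcases zero_or_one (b k) with hb | hb <;>
      simp [ha, hb, two]
    exact mul_le_one₀ (he1 k) (he0 k) (he1 k)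

theorem fwt_le_fwt_map {n : ℕ} (e : Fin n → ℝ) (he0 : ∀ k, 0 ≤ e k) (he1 : ∀ k, e k ≤ 1)
    (T : (Fin n → ZMod 2) →ₗ[ZMod 2] (Fin n → ZMod 2))
    (hTf : ∀ k, fwt e (T (Pi.single k 1)) = e k) (v : Fin n → ZMod 2) :
    fwt e v ≤ fwt e (T v) := by
  have key : ∀ s : Finset (Fin n),
      ∏ k ∈ s, e k ≤ fwt e (T (∑ k ∈ s, Pi.single k 1)) := by
    intro s
    induction s using Finset.induction_on with
    | empty => simp [fwt]
    | insert k s hk ih =>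
      rw [Finset.prod_insert hk, Finset.sum_insert hk, map_add]
      refine le_trans ?_ (fwt_mul_le_fwt_add e he0 he1 _ _)
      rw [hTf]
      exact mul_le_mul_of_nonneg_left ih (he0 k)
  have hv : ∑ k ∈ Finset.univ.filter (fun k => v k = 1), Pi.single k (1 : ZMod 2) = v := by
    have zero_or_one : ∀ x : ZMod 2, x = 0 ∨ x = 1 := by decide
    ext j
    rw [Finset.sum_apply, Finset.sum_pi_single]
    rcases zero_or_one (v j) with h | h <;> simp [h]
  have h := key (Finset.univ.filter (fun k => v k = 1))
  rw [hv] at h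
  exact h

theorem stmt_18 {n : ℕ}
    (e : Fin n → ℝ) (he0 : ∀ k, 0 ≤ e k) (he1 : ∀ k, e k ≤ 1)
    (T : (Fin n → ZMod 2) →ₗ[ZMod 2] (Fin n → ZMod 2))
    (hTinv : ∀ v, T (T v) = v)
    (hTf : ∀ k, fwt e (T (Pi.single k 1)) = e k) :
    ∀ v : Fin n → ZMod 2, fwt e (T v) = fwt e v := by
  intro v
  have h := fwt_le_fwt_map e he0 he1 T hTf (T v)
  rw [hTinv] at h
  exact le_antisymm h (fwt_le_fwt_map e he0 he1 T hTf v)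
end
end
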